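/- arXiv:2312.11934 — 6 statements merged into one kernel-verified Lean document; each statement's English description precedes it below -/
import Mathlib

section
/- Let α₁, α₂, β₁, γ₂ be positive reals, let β₂, γ₁ be nonnegative reals with β₂·γ₁ = 0, let κ_L, κ_X, κ_Y be positive reals, and let i, j ≥ 1 be natural numbers. Assume the genericity conditions: if β₂ ≠ 0 then α₂β₁ ≠ α₁β₂, and if γ₁ ≠ 0 then α₁γ₂ ≠ α₂γ₁. Then C(i+1,j+1)² = C(i,j+2)·C(i+2,j) if and only if β₂ = 0 and γ₁ = 0 (i.e., if and only if there is no directed edge between X and Y). -/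
/-!
The tetrad defect `C(i,j+2)·C(i+2,j) - C(i+1,j+1)²` is a Cauchy–Schwarz defect in which the source
`k` has weight `uₖⁱ vₖʲ κₖ`. Lagrange's identity writes it as a sum over pairs of sources of the
product of their weights times the squared determinant of their loadings. With nonnegative weights
it therefore vanishes iff any two sources of nonzero weight have proportional loadings. By
genericity no noise of nonzero weight is proportional to the confounder, so this means that both
noises have weight zero.
-/

open Finset

section LagrangeIdentity

variable {ι R : Type*}

theorem two_mul_sum_mul_sum_sub_sq_eq_sum_sum [CommRing R] (s : Finset ι) (w u v : ι → R) :
    2 * ((∑ k ∈ s, w k * v k ^ 2) * (∑ k ∈ s, w k * u k ^ 2) -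
        (∑ k ∈ s, w k * (u k * v k)) ^ 2) =
      ∑ k ∈ s, ∑ l ∈ s, w k * w l * (u k * v l - u l * v k) ^ 2 := by
  have expand (k l : ι) : w k * w l * (u k * v l - u l * v k) ^ 2 =
      w k * u k ^ 2 * (w l * v l ^ 2) + w k * v k ^ 2 * (w l * u l ^ 2) -
        2 * (w k * (u k * v k) * (w l * (u l * v l))) := by ring
  simp only [expand, sum_sub_distrib, sum_add_distrib, ← mul_sum, ← sum_mul]
  ring

variable [CommRing R] [LinearOrder R] [IsStrictOrderedRing R] {s : Finset ι} {w u v : ι → R}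

theorem sq_sum_mul_eq_sum_mul_sum_iff (hw : ∀ k ∈ s, 0 ≤ w k) :
    (∑ k ∈ s, w k * (u k * v k)) ^ 2 =
        (∑ k ∈ s, w k * v k ^ 2) * (∑ k ∈ s, w k * u k ^ 2) ↔
      ∀ k ∈ s, ∀ l ∈ s, w k ≠ 0 → w l ≠ 0 → u k * v l = u l * v k := by
  have term_nonneg : ∀ k ∈ s, ∀ l ∈ s, 0 ≤ w k * w l * (u k * v l - u l * v k) ^ 2 :=
    fun k hk l hl ↦ mul_nonneg (mul_nonneg (hw k hk) (hw l hl)) (sq_nonneg _)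
  have term_eq_zero_iff (k l : ι) : w k * w l * (u k * v l - u l * v k) ^ 2 = 0 ↔
      (w k ≠ 0 → w l ≠ 0 → u k * v l = u l * v k) := by
    simp only [mul_eq_zero, pow_eq_zero_iff two_ne_zero, sub_eq_zero]
    tauto
  rw [eq_comm, ← sub_eq_zero, ← mul_eq_zero_iff_left (two_ne_zero (α := R)),
    two_mul_sum_mul_sum_sub_sq_eq_sum_sum,
    sum_eq_zero_iff_of_nonneg fun k hk ↦ sum_nonneg (term_nonneg k hk)]
  refine forall₂_congr fun k hk ↦ ?_
  simp only [sum_eq_zero_iff_of_nonneg (term_nonneg k hk), term_eq_zero_iff]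

end LagrangeIdentity

section MixedCumulant

variable {ι R : Type*} [Fintype ι]

/-- The joint cumulant `Cum_{a,b}(X, Y)` of two linear mixtures `X = ∑ uₖ Sₖ` and `Y = ∑ vₖ Sₖ` of
independent sources `Sₖ`. Only one value `κₖ` is recorded per source, its cumulant of order `a + b`,
so cumulants can be compared only when they have the same total order. -/
def mixedCumulant [CommSemiring R] (κ u v : ι → R) (a b : ℕ) : R :=
  ∑ k, u k ^ a * v k ^ b * κ k

variable [CommRing R] [LinearOrder R] [IsStrictOrderedRing R] {κ u v : ι → R} {i j : ℕ}

theorem mixedCumulant_sq_eq_mul_iff (hw : ∀ k, 0 ≤ u k ^ i * v k ^ j * κ k) :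
    mixedCumulant κ u v (i + 1) (j + 1) ^ 2 =
        mixedCumulant κ u v i (j + 2) * mixedCumulant κ u v (i + 2) j ↔
      ∀ k l, u k ^ i * v k ^ j * κ k ≠ 0 → u l ^ i * v l ^ j * κ l ≠ 0 →
        u k * v l = u l * v k := by
  have cauchySchwarz_eq_iff := sq_sum_mul_eq_sum_mul_sum_iff (s := univ) (u := u) (v := v)
    fun k _ ↦ hw k
  simp only [mem_univ, true_imp_iff] at cauchySchwarz_eq_iff
  rw [← cauchySchwarz_eq_iff]
  simp only [mixedCumulant]
  ring_nf

theorem mixedCumulant_sq_eq_mul_iff_forall_ne (hw : ∀ k, 0 ≤ u k ^ i * v k ^ j * κ k)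
    {o : ι} (ho : u o ^ i * v o ^ j * κ o ≠ 0)
    (hgen : ∀ k ≠ o, u k ^ i * v k ^ j * κ k ≠ 0 → u o * v k ≠ u k * v o) :
    mixedCumulant κ u v (i + 1) (j + 1) ^ 2 =
        mixedCumulant κ u v i (j + 2) * mixedCumulant κ u v (i + 2) j ↔
      ∀ k ≠ o, u k ^ i * v k ^ j * κ k = 0 := by
  rw [mixedCumulant_sq_eq_mul_iff hw]
  constructor
  · intro proportional k hk
    by_contra hwk
    exact hgen k hk hwk (proportional o k ho hwk)
  · intro weight_eq_zero k l hwk hwl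
    obtain rfl : k = o := not_imp_comm.mp (weight_eq_zero k) hwk
    obtain rfl : l = k := not_imp_comm.mp (weight_eq_zero l) hwl
    rfl

end MixedCumulant

theorem stmt1_general {R : Type*} [CommRing R] [LinearOrder R] [IsStrictOrderedRing R]
    {α₁ α₂ β₁ β₂ γ₁ γ₂ κL κX κY : R} {i j : ℕ}
    (hα₁ : 0 < α₁) (hα₂ : 0 < α₂) (hβ₁ : 0 < β₁) (hγ₂ : 0 < γ₂)
    (hβ₂ : 0 ≤ β₂) (hγ₁ : 0 ≤ γ₁)
    (hκL : 0 < κL) (hκX : 0 < κX) (hκY : 0 < κY)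
    (hi : 1 ≤ i) (hj : 1 ≤ j)
    (hgen₁ : β₂ ≠ 0 → α₂ * β₁ ≠ α₁ * β₂)
    (hgen₂ : γ₁ ≠ 0 → α₁ * γ₂ ≠ α₂ * γ₁)
    {C : ℕ → ℕ → R}
    (hC : ∀ a b : ℕ, C a b =
      α₁ ^ a * α₂ ^ b * κL + β₁ ^ a * β₂ ^ b * κX + γ₁ ^ a * γ₂ ^ b * κY) :
    C (i + 1) (j + 1) ^ 2 = C i (j + 2) * C (i + 2) j ↔ β₂ = 0 ∧ γ₁ = 0 := by
  have C_eq (a b : ℕ) : C a b = mixedCumulant ![κL, κX, κY] ![α₁, β₁, γ₁] ![α₂, β₂, γ₂] a b := by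
    simp [hC, mixedCumulant, Fin.sum_univ_three]
  have weightX_eq_zero_iff : β₁ ^ i * β₂ ^ j * κX = 0 ↔ β₂ = 0 := by
    simp [hβ₁.ne', hκX.ne', Nat.ne_of_gt hj]
  have weightY_eq_zero_iff : γ₁ ^ i * γ₂ ^ j * κY = 0 ↔ γ₁ = 0 := by
    simp [hγ₂.ne', hκY.ne', Nat.ne_of_gt hi]
  simp only [C_eq]
  rw [mixedCumulant_sq_eq_mul_iff_forall_ne (o := 0)]
  · simpa [Fin.forall_fin_succ] using and_congr weightX_eq_zero_iff weightY_eq_zero_iff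
  · intro k
    fin_cases k <;> dsimp <;> positivity
  · dsimp
    positivity
  · intro k hk hwk
    fin_cases k
    · contradiction
    · simpa [mul_comm] using (hgen₁ (weightX_eq_zero_iff.not.mp hwk)).symm
    · simpa [mul_comm] using hgen₂ (weightY_eq_zero_iff.not.mp hwk)

/-- Theorem 4.2: with the genericity conditions, the extended tetrad
constraint `C(i+1,j+1)² = C(i,j+2)·C(i+2,j)` holds iff there is no directed edge
between `X` and `Y`, i.e. iff `β₂ = 0` and `γ₁ = 0`. -/
theorem stmt1 (α₁ α₂ β₁ β₂ γ₁ γ₂ κL κX κY : ℝ) (i j : ℕ)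
    (hα₁ : 0 < α₁) (hα₂ : 0 < α₂) (hβ₁ : 0 < β₁) (hγ₂ : 0 < γ₂)
    (hβ₂ : 0 ≤ β₂) (hγ₁ : 0 ≤ γ₁) (hacyc : β₂ * γ₁ = 0)
    (hκL : 0 < κL) (hκX : 0 < κX) (hκY : 0 < κY)
    (hi : 1 ≤ i) (hj : 1 ≤ j)
    (hgen₁ : β₂ ≠ 0 → α₂ * β₁ ≠ α₁ * β₂)
    (hgen₂ : γ₁ ≠ 0 → α₁ * γ₂ ≠ α₂ * γ₁)
    (C : ℕ → ℕ → ℝ)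
    (hC : ∀ a b : ℕ, C a b =
      α₁ ^ a * α₂ ^ b * κL + β₁ ^ a * β₂ ^ b * κX + γ₁ ^ a * γ₂ ^ b * κY) :
    C (i+1) (j+1) ^ 2 = C i (j+2) * C (i+2) j ↔ (β₂ = 0 ∧ γ₁ = 0) :=
  stmt1_general hα₁ hα₂ hβ₁ hγ₂ hβ₂ hγ₁ hκL hκX hκY hi hj hgen₁ hgen₂ hC
end

section
/- Let α₁, α₂, β₁, β₂, κ_L, κ_E be real numbers with α₁ ≠ 0 and β₁ ≠ 0, and let i, j be natural numbers. Then for every real θ, a·θ² + b·θ + c = a·(θ − α₂/α₁)·(θ − β₂/β₁), where a := C(i+2,j+1)² − C(i+1,j+2)·C(i+3,j), b := C(i,j+3)·C(i+3,j) − C(i+1,j+2)·C(i+2,j+1), and c := C(i+1,j+2)² − C(i,j+3)·C(i+2,j+1). -/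
/-!
Along an antidiagonal `a + b = n`, the cumulants `C a b` form a combination of two geometric
progressions with ratios `α₂ / α₁` and `β₂ / β₁`, so they satisfy a linear recurrence of order two
whose characteristic polynomial has these ratios as roots. Up to sign, the quadratic in `θ` is the
determinant with rows `(s₀, s₁, s₂)`, `(s₁, s₂, s₃)`, `(1, θ, θ²)`, where `s₀, …, s₃` are the four
consecutive terms from `C (i + 3) j` to `C i (j + 3)`. The recurrence makes the first two rows
orthogonal to the coefficient vector of the characteristic polynomial, so the determinant is a
multiple of that polynomial.
-/

section CommRing

variable {R : Type*} [CommRing R]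

theorem mul_hankel_quadratic_eq_of_recurrence {k p q s₀ s₁ s₂ s₃ : R}
    (h₂ : k * s₂ = p * s₁ - q * s₀) (h₃ : k * s₃ = p * s₂ - q * s₁) (θ : R) :
    k * ((s₁ ^ 2 - s₂ * s₀) * θ ^ 2 + (s₃ * s₀ - s₂ * s₁) * θ + (s₂ ^ 2 - s₃ * s₁))
      = (s₁ ^ 2 - s₂ * s₀) * (k * θ ^ 2 - p * θ + q) := by
  have linear_coeff : k * (s₃ * s₀ - s₂ * s₁) = -p * (s₁ ^ 2 - s₂ * s₀) := by
    linear_combination s₀ * h₃ - s₁ * h₂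
  have constant_coeff : k * (s₂ ^ 2 - s₃ * s₁) = q * (s₁ ^ 2 - s₂ * s₀) := by
    linear_combination s₂ * h₂ - s₁ * h₃
  linear_combination θ * linear_coeff + constant_coeff

theorem cumulant_antidiagonal_recurrence {α₁ α₂ β₁ β₂ κL κE : R} {C : ℕ → ℕ → R}
    (hC : ∀ a b : ℕ, C a b = α₁ ^ a * α₂ ^ b * κL + β₁ ^ a * β₂ ^ b * κE) (a b : ℕ) :
    α₁ * β₁ * C a (b + 2)
      = (α₂ * β₁ + α₁ * β₂) * C (a + 1) (b + 1) - α₂ * β₂ * C (a + 2) b := by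
  simp only [hC]
  ring

end CommRing

theorem stmt2_general {K : Type*} [Field K] {α₁ α₂ β₁ β₂ κL κE : K} (hα₁ : α₁ ≠ 0) (hβ₁ : β₁ ≠ 0)
    {C : ℕ → ℕ → K}
    (hC : ∀ a b : ℕ, C a b = α₁ ^ a * α₂ ^ b * κL + β₁ ^ a * β₂ ^ b * κE) (i j : ℕ) (θ : K) :
    (C (i + 2) (j + 1) ^ 2 - C (i + 1) (j + 2) * C (i + 3) j) * θ ^ 2
      + (C i (j + 3) * C (i + 3) j - C (i + 1) (j + 2) * C (i + 2) (j + 1)) * θ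
      + (C (i + 1) (j + 2) ^ 2 - C i (j + 3) * C (i + 2) (j + 1))
      = (C (i + 2) (j + 1) ^ 2 - C (i + 1) (j + 2) * C (i + 3) j)
        * (θ - α₂ / α₁) * (θ - β₂ / β₁) := by
  have characteristic_factorization :
      α₁ * β₁ * θ ^ 2 - (α₂ * β₁ + α₁ * β₂) * θ + α₂ * β₂
        = α₁ * β₁ * ((θ - α₂ / α₁) * (θ - β₂ / β₁)) := by
    field_simp
    ring
  apply mul_left_cancel₀ (mul_ne_zero hα₁ hβ₁)
  rw [mul_hankel_quadratic_eq_of_recurrence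
      (cumulant_antidiagonal_recurrence hC (i + 1) j)
      (cumulant_antidiagonal_recurrence hC i (j + 1)),
    characteristic_factorization]
  ring

/-- the paper's quadratic factors as
`a·θ² + b·θ + c = a·(θ − α₂/α₁)·(θ − β₂/β₁)`, where the coefficients are built
from the cumulants `C a b = α₁^a·α₂^b·κL + β₁^a·β₂^b·κE`. -/
theorem stmt2 (α₁ α₂ β₁ β₂ κL κE : ℝ) (hα₁ : α₁ ≠ 0) (hβ₁ : β₁ ≠ 0) (i j : ℕ)
    (C : ℕ → ℕ → ℝ)
    (hC : ∀ a b : ℕ, C a b = α₁ ^ a * α₂ ^ b * κL + β₁ ^ a * β₂ ^ b * κE) :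
    ∀ θ : ℝ,
      (C (i+2) (j+1) ^ 2 - C (i+1) (j+2) * C (i+3) j) * θ ^ 2
      + (C i (j+3) * C (i+3) j - C (i+1) (j+2) * C (i+2) (j+1)) * θ
      + (C (i+1) (j+2) ^ 2 - C i (j+3) * C (i+2) (j+1))
      = (C (i+2) (j+1) ^ 2 - C (i+1) (j+2) * C (i+3) j)
        * (θ - α₂ / α₁) * (θ - β₂ / β₁) :=
  stmt2_general hα₁ hβ₁ hC i j
end

section
/- Let α₁, α₂, β₁, β₂, κ_L, κ_E be real numbers with α₁ ≠ 0 and β₁ ≠ 0, and let i, j ≥ 1 be natural numbers. Then both ratios of mixing coefficients θ₁ := α₂/α₁ and θ₂ := β₂/β₁ are roots of the quadratic equation (C(i+2,j+1)² − C(i+1,j+2)·C(i+3,j))·θ² + (C(i,j+3)·C(i+3,j) − C(i+1,j+2)·C(i+2,j+1))·θ + (C(i+1,j+2)² − C(i,j+3)·C(i+2,j+1)) = 0. -/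
/-!
Along the antidiagonal `C (i+3) j, C (i+2) (j+1), C (i+1) (j+2), C i (j+3)` the cumulants form a
sum of two geometric progressions, with ratios `α₂ / α₁` and `β₂ / β₁`. The coefficients of the
quadratic are, up to sign, the `2 × 2` minors of the `2 × 3` Hankel matrix of these four terms, so,
as in Prony's method, the quadratic is a multiple of `(θ - α₂ / α₁) * (θ - β₂ / β₁)`.
-/

theorem prony_quadratic_eq_mul {R : Type*} [CommRing R] {s₀ s₁ s₂ s₃ p q x y : R}
    (h₀ : s₀ = p * x ^ 0 + q * y ^ 0) (h₁ : s₁ = p * x ^ 1 + q * y ^ 1)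
    (h₂ : s₂ = p * x ^ 2 + q * y ^ 2) (h₃ : s₃ = p * x ^ 3 + q * y ^ 3) (θ : R) :
    (s₁ ^ 2 - s₂ * s₀) * θ ^ 2 + (s₃ * s₀ - s₂ * s₁) * θ + (s₂ ^ 2 - s₃ * s₁) =
      -(p * q * (x - y) ^ 2) * ((θ - x) * (θ - y)) := by
  have minor₀₁ : s₁ ^ 2 - s₂ * s₀ = -(p * q * (x - y) ^ 2) := by
    rw [h₀, h₁, h₂]; ring
  have minor₀₂ : s₃ * s₀ - s₂ * s₁ = p * q * (x - y) ^ 2 * (x + y) := by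
    rw [h₀, h₁, h₂, h₃]; ring
  have minor₁₂ : s₂ ^ 2 - s₃ * s₁ = -(p * q * (x - y) ^ 2) * (x * y) := by
    rw [h₁, h₂, h₃]; ring
  rw [minor₀₁, minor₀₂, minor₁₂]
  ring

section Field

variable {K : Type*} [Field K]

theorem pow_mul_pow_add_eq_mul_div_pow {a : K} (ha : a ≠ 0) (b : K) (m n k : ℕ) :
    a ^ m * b ^ (n + k) = a ^ (m + k) * b ^ n * (b / a) ^ k := by
  have hak : a ^ k * (b / a) ^ k = b ^ k := by rw [← mul_pow, mul_div_cancel₀ b ha]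
  calc a ^ m * b ^ (n + k) = a ^ m * b ^ n * (a ^ k * (b / a) ^ k) := by rw [hak]; ring
    _ = a ^ (m + k) * b ^ n * (b / a) ^ k := by ring

theorem stmt3_general {α₁ α₂ β₁ β₂ κL κE : K} (hα₁ : α₁ ≠ 0) (hβ₁ : β₁ ≠ 0) {C : ℕ → ℕ → K}
    (hC : ∀ a b : ℕ, C a b = α₁ ^ a * α₂ ^ b * κL + β₁ ^ a * β₂ ^ b * κE) (i j : ℕ) (θ : K) :
    (C (i+2) (j+1) ^ 2 - C (i+1) (j+2) * C (i+3) j) * θ ^ 2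
      + (C i (j+3) * C (i+3) j - C (i+1) (j+2) * C (i+2) (j+1)) * θ
      + (C (i+1) (j+2) ^ 2 - C i (j+3) * C (i+2) (j+1)) =
    -((α₁ ^ (i+3) * α₂ ^ j * κL) * (β₁ ^ (i+3) * β₂ ^ j * κE) * (α₂ / α₁ - β₂ / β₁) ^ 2)
      * ((θ - α₂ / α₁) * (θ - β₂ / β₁)) := by
  have antidiagonal (m k : ℕ) : C m (j + k) =
      α₁ ^ (m + k) * α₂ ^ j * κL * (α₂ / α₁) ^ k + β₁ ^ (m + k) * β₂ ^ j * κE * (β₂ / β₁) ^ k := by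
    rw [hC, pow_mul_pow_add_eq_mul_div_pow hα₁, pow_mul_pow_add_eq_mul_div_pow hβ₁]
    ring
  exact prony_quadratic_eq_mul (antidiagonal (i + 3) 0) (antidiagonal (i + 2) 1)
    (antidiagonal (i + 1) 2) (antidiagonal i 3) θ

end Field

/-- Theorem 4.1: both ratios of mixing coefficients `α₂/α₁` and
`β₂/β₁` are roots of the paper's quadratic equation in the cumulants
`C a b = α₁^a·α₂^b·κL + β₁^a·β₂^b·κE`. -/
theorem stmt3 (α₁ α₂ β₁ β₂ κL κE : ℝ) (hα₁ : α₁ ≠ 0) (hβ₁ : β₁ ≠ 0)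
    (i j : ℕ) (hi : 1 ≤ i) (hj : 1 ≤ j)
    (C : ℕ → ℕ → ℝ)
    (hC : ∀ a b : ℕ, C a b = α₁ ^ a * α₂ ^ b * κL + β₁ ^ a * β₂ ^ b * κE) :
    ((C (i+2) (j+1) ^ 2 - C (i+1) (j+2) * C (i+3) j) * (α₂ / α₁) ^ 2
      + (C i (j+3) * C (i+3) j - C (i+1) (j+2) * C (i+2) (j+1)) * (α₂ / α₁)
      + (C (i+1) (j+2) ^ 2 - C i (j+3) * C (i+2) (j+1)) = 0)
    ∧
    ((C (i+2) (j+1) ^ 2 - C (i+1) (j+2) * C (i+3) j) * (β₂ / β₁) ^ 2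
      + (C i (j+3) * C (i+3) j - C (i+1) (j+2) * C (i+2) (j+1)) * (β₂ / β₁)
      + (C (i+1) (j+2) ^ 2 - C i (j+3) * C (i+2) (j+1)) = 0) := by
  constructor <;> simp [stmt3_general hα₁ hβ₁ hC i j]
end

section
/- Let α₁, α₂, β₁, β₂, κ_L, κ_E be nonzero real numbers with α₂β₁ ≠ α₁β₂, and let i, j be natural numbers. Then the leading coefficient of the paper's quadratic equation is nonzero: C(i+2,j+1)² − C(i+1,j+2)·C(i+3,j) ≠ 0. -/
section CommRing

variable {R : Type*} [CommRing R]

/-- The joint cumulant `Cum_{a,b}(X, Y)` of `X = α₁ L + β₁ E` and `Y = α₂ L + β₂ E`. The cumulants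
`κL` and `κE` of the components do not carry their order `a + b`, so values of this function belong
to the same model only along a fixed `a + b`. -/
def jointCumulant (α₁ α₂ β₁ β₂ κL κE : R) (a b : ℕ) : R :=
  α₁ ^ a * α₂ ^ b * κL + β₁ ^ a * β₂ ^ b * κE

/-- With `M = !![α₁, β₁; α₂, β₂]`, this is
`-det (M * diagonal ![u, v] * Mᵀ) = -(u * v * det M ^ 2)`. -/
theorem weighted_lagrange_identity (u v α₁ α₂ β₁ β₂ : R) :
    (u * (α₁ * α₂) + v * (β₁ * β₂)) ^ 2 - (u * α₂ ^ 2 + v * β₂ ^ 2) * (u * α₁ ^ 2 + v * β₁ ^ 2) =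
      -(u * v * (α₂ * β₁ - α₁ * β₂) ^ 2) := by
  ring

theorem jointCumulant_add_add (α₁ α₂ β₁ β₂ κL κE : R) (m n p q : ℕ) :
    jointCumulant α₁ α₂ β₁ β₂ κL κE (m + p) (n + q) =
      α₁ ^ m * α₂ ^ n * κL * (α₁ ^ p * α₂ ^ q) + β₁ ^ m * β₂ ^ n * κE * (β₁ ^ p * β₂ ^ q) := by
  rw [jointCumulant]
  ring

theorem jointCumulant_sq_sub_mul (α₁ α₂ β₁ β₂ κL κE : R) (m n : ℕ) :
    jointCumulant α₁ α₂ β₁ β₂ κL κE (m + 1) (n + 1) ^ 2 -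
        jointCumulant α₁ α₂ β₁ β₂ κL κE m (n + 2) * jointCumulant α₁ α₂ β₁ β₂ κL κE (m + 2) n =
      -(α₁ ^ m * α₂ ^ n * κL * (β₁ ^ m * β₂ ^ n * κE) * (α₂ * β₁ - α₁ * β₂) ^ 2) := by
  have shift := jointCumulant_add_add α₁ α₂ β₁ β₂ κL κE m n
  have shift_zero_two := shift 0 2
  have shift_two_zero := shift 2 0
  rw [add_zero] at shift_zero_two shift_two_zero
  rw [shift 1 1, shift_zero_two, shift_two_zero]
  simpa only [pow_zero, pow_one, one_mul, mul_one] using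
    weighted_lagrange_identity (α₁ ^ m * α₂ ^ n * κL) (β₁ ^ m * β₂ ^ n * κE) α₁ α₂ β₁ β₂

theorem stmt5_general [NoZeroDivisors R] {α₁ α₂ β₁ β₂ κL κE : R}
    (hα₁ : α₁ ≠ 0) (hα₂ : α₂ ≠ 0) (hβ₁ : β₁ ≠ 0) (hβ₂ : β₂ ≠ 0)
    (hκL : κL ≠ 0) (hκE : κE ≠ 0) (hratio : α₂ * β₁ ≠ α₁ * β₂) (m n : ℕ) :
    jointCumulant α₁ α₂ β₁ β₂ κL κE (m + 1) (n + 1) ^ 2 -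
      jointCumulant α₁ α₂ β₁ β₂ κL κE m (n + 2) * jointCumulant α₁ α₂ β₁ β₂ κL κE (m + 2) n ≠
        0 := by
  have weightL_ne_zero : α₁ ^ m * α₂ ^ n * κL ≠ 0 :=
    mul_ne_zero (mul_ne_zero (pow_ne_zero m hα₁) (pow_ne_zero n hα₂)) hκL
  have weightE_ne_zero : β₁ ^ m * β₂ ^ n * κE ≠ 0 :=
    mul_ne_zero (mul_ne_zero (pow_ne_zero m hβ₁) (pow_ne_zero n hβ₂)) hκE
  have det_sq_ne_zero : (α₂ * β₁ - α₁ * β₂) ^ 2 ≠ 0 := pow_ne_zero 2 (sub_ne_zero.mpr hratio)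
  rw [jointCumulant_sq_sub_mul]
  exact neg_ne_zero.mpr (mul_ne_zero (mul_ne_zero weightL_ne_zero weightE_ne_zero) det_sq_ne_zero)

end CommRing

/-- the leading coefficient of the paper's quadratic equation is
nonzero when all parameters are nonzero and the ratios of mixing coefficients
differ; here `C a b = α₁^a·α₂^b·κL + β₁^a·β₂^b·κE`. -/
theorem stmt5 (α₁ α₂ β₁ β₂ κL κE : ℝ)
    (hα₁ : α₁ ≠ 0) (hα₂ : α₂ ≠ 0) (hβ₁ : β₁ ≠ 0) (hβ₂ : β₂ ≠ 0)
    (hκL : κL ≠ 0) (hκE : κE ≠ 0) (hratio : α₂ * β₁ ≠ α₁ * β₂) (i j : ℕ)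
    (C : ℕ → ℕ → ℝ)
    (hC : ∀ a b : ℕ, C a b = α₁ ^ a * α₂ ^ b * κL + β₁ ^ a * β₂ ^ b * κE) :
    C (i+2) (j+1) ^ 2 - C (i+1) (j+2) * C (i+3) j ≠ 0 := by
  obtain rfl : C = jointCumulant α₁ α₂ β₁ β₂ κL κE := funext₂ hC
  exact stmt5_general hα₁ hα₂ hβ₁ hβ₂ hκL hκE hratio (i + 1) j
end

section
/- Let α₁, α₂, β₁, β₂, κ_L, κ_E be nonzero real numbers with α₂β₁ ≠ α₁β₂ (i.e., the two independent components have different ratios of mixing coefficients), and let i, j ≥ 1 be natural numbers. Then for every real θ, (C(i+2,j+1)² − C(i+1,j+2)·C(i+3,j))·θ² + (C(i,j+3)·C(i+3,j) − C(i+1,j+2)·C(i+2,j+1))·θ + (C(i+1,j+2)² − C(i,j+3)·C(i+2,j+1)) = 0 if and only if θ = α₂/α₁ or θ = β₂/β₁. In particular, the two ratios of mixing coefficients are exactly the two (distinct) roots of the quadratic. -/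
/-!
Consecutive joint cumulants of a fixed total order form a sum of two geometric progressions, with
ratios `α₂ / α₁` and `β₂ / β₁`. The coefficients of the quadratic are, up to sign, the `2 × 2`
minors of the Hankel matrix with rows `C (i+3) j, C (i+2) (j+1), C (i+1) (j+2)` and
`C (i+2) (j+1), C (i+1) (j+2), C i (j+3)`. By Cauchy–Binet these minors share a nonzero factor, and
what remains are the coefficients of `(θ α₁ - α₂) (θ β₁ - β₂)`, the characteristic polynomial of the
linear recurrence satisfied by the sequence.
-/

/-- The data of two observed variables `X = α₁ L + β₁ E` and `Y = α₂ L + β₂ E` that enter their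
joint cumulants of one fixed order: the mixing coefficients, and the cumulants `κL`, `κE` of that
order of the independent components. -/
structure TwoComponentModel (R : Type*) where
  (α₁ α₂ β₁ β₂ κL κE : R)

namespace TwoComponentModel

section CommRing

variable {R : Type*} [CommRing R] (M : TwoComponentModel R)

/-- The joint cumulant `Cum_{a,b}(X, Y)`. The order `a + b` is not recorded, so values at different
orders are only meaningful if `κL` and `κE` are changed accordingly. -/
def jointCumulant (a b : ℕ) : R :=
  M.α₁ ^ a * M.α₂ ^ b * M.κL + M.β₁ ^ a * M.β₂ ^ b * M.κE

/-- The determinant of the Hankel matrix of the joint cumulants at `(a + 2, b)`,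
`(a + 1, b + 1)`, `(a, b + 2)`; it vanishes when a single component generates all three. -/
def hankelDet (a b : ℕ) : R :=
  M.jointCumulant (a + 2) b * M.jointCumulant a (b + 2) - M.jointCumulant (a + 1) (b + 1) ^ 2

theorem hankelDet_eq_mul (a b : ℕ) :
    M.hankelDet a b =
      M.α₁ ^ a * M.α₂ ^ b * M.κL * (M.β₁ ^ a * M.β₂ ^ b * M.κE) *
        (M.α₂ * M.β₁ - M.α₁ * M.β₂) ^ 2 := by
  simp only [hankelDet, jointCumulant]
  ring

theorem jointCumulant_mul_sub_mul (a b : ℕ) :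
    M.jointCumulant a (b + 3) * M.jointCumulant (a + 3) b -
        M.jointCumulant (a + 1) (b + 2) * M.jointCumulant (a + 2) (b + 1) =
      M.hankelDet a b * (M.α₁ * M.β₂ + M.α₂ * M.β₁) := by
  simp only [hankelDet_eq_mul, jointCumulant]
  ring

theorem hankelDet_succ_left (a b : ℕ) :
    M.hankelDet (a + 1) b = M.hankelDet a b * (M.α₁ * M.β₁) := by
  simp only [hankelDet_eq_mul]
  ring

theorem hankelDet_succ_right (a b : ℕ) :
    M.hankelDet a (b + 1) = M.hankelDet a b * (M.α₂ * M.β₂) := by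
  simp only [hankelDet_eq_mul]
  ring

/-- The quadratic of the identification theorem, whose coefficients are computed from the joint
cumulants of order `i + j + 3` alone. -/
def ratioQuadratic (i j : ℕ) (θ : R) : R :=
  (M.jointCumulant (i + 2) (j + 1) ^ 2
      - M.jointCumulant (i + 1) (j + 2) * M.jointCumulant (i + 3) j) * θ ^ 2
    + (M.jointCumulant i (j + 3) * M.jointCumulant (i + 3) j
      - M.jointCumulant (i + 1) (j + 2) * M.jointCumulant (i + 2) (j + 1)) * θ
    + (M.jointCumulant (i + 1) (j + 2) ^ 2
      - M.jointCumulant i (j + 3) * M.jointCumulant (i + 2) (j + 1))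

theorem ratioQuadratic_eq_mul (i j : ℕ) (θ : R) :
    M.ratioQuadratic i j θ =
      -M.hankelDet i j * ((θ * M.α₁ - M.α₂) * (θ * M.β₁ - M.β₂)) := by
  calc M.ratioQuadratic i j θ
      = -M.hankelDet (i + 1) j * θ ^ 2
          + M.hankelDet i j * (M.α₁ * M.β₂ + M.α₂ * M.β₁) * θ
          - M.hankelDet i (j + 1) := by
        rw [← jointCumulant_mul_sub_mul, ratioQuadratic, hankelDet, hankelDet]
        ring
    _ = -M.hankelDet i j * ((θ * M.α₁ - M.α₂) * (θ * M.β₁ - M.β₂)) := by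
        rw [hankelDet_succ_left, hankelDet_succ_right]
        ring

variable {M}

theorem hankelDet_ne_zero [NoZeroDivisors R] (hα₁ : M.α₁ ≠ 0) (hα₂ : M.α₂ ≠ 0) (hβ₁ : M.β₁ ≠ 0)
    (hβ₂ : M.β₂ ≠ 0) (hκL : M.κL ≠ 0) (hκE : M.κE ≠ 0) (hratio : M.α₂ * M.β₁ ≠ M.α₁ * M.β₂)
    (a b : ℕ) : M.hankelDet a b ≠ 0 := by
  have hdiff : M.α₂ * M.β₁ - M.α₁ * M.β₂ ≠ 0 := sub_ne_zero.mpr hratio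
  simp [hankelDet_eq_mul, pow_ne_zero, *]

end CommRing

theorem ratioQuadratic_eq_zero_iff {K : Type*} [Field K] {M : TwoComponentModel K} {i j : ℕ}
    (hα₁ : M.α₁ ≠ 0) (hβ₁ : M.β₁ ≠ 0) (hdet : M.hankelDet i j ≠ 0) (θ : K) :
    M.ratioQuadratic i j θ = 0 ↔ θ = M.α₂ / M.α₁ ∨ θ = M.β₂ / M.β₁ := by
  rw [ratioQuadratic_eq_mul, mul_eq_zero, or_iff_right (neg_ne_zero.mpr hdet), mul_eq_zero,
    sub_eq_zero, sub_eq_zero, eq_div_iff hα₁, eq_div_iff hβ₁]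

end TwoComponentModel

open TwoComponentModel in
theorem stmt6_general {K : Type*} [Field K] {α₁ α₂ β₁ β₂ κL κE : K}
    (hα₁ : α₁ ≠ 0) (hα₂ : α₂ ≠ 0) (hβ₁ : β₁ ≠ 0) (hβ₂ : β₂ ≠ 0)
    (hκL : κL ≠ 0) (hκE : κE ≠ 0) (hratio : α₂ * β₁ ≠ α₁ * β₂) (i j : ℕ) {C : ℕ → ℕ → K}
    (hC : ∀ a b : ℕ, C a b = α₁ ^ a * α₂ ^ b * κL + β₁ ^ a * β₂ ^ b * κE) (θ : K) :
    (C (i + 2) (j + 1) ^ 2 - C (i + 1) (j + 2) * C (i + 3) j) * θ ^ 2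
        + (C i (j + 3) * C (i + 3) j - C (i + 1) (j + 2) * C (i + 2) (j + 1)) * θ
        + (C (i + 1) (j + 2) ^ 2 - C i (j + 3) * C (i + 2) (j + 1)) = 0
      ↔ θ = α₂ / α₁ ∨ θ = β₂ / β₁ := by
  let M : TwoComponentModel K := ⟨α₁, α₂, β₁, β₂, κL, κE⟩
  obtain rfl : C = M.jointCumulant := funext₂ hC
  have hdet : M.hankelDet i j ≠ 0 := hankelDet_ne_zero hα₁ hα₂ hβ₁ hβ₂ hκL hκE hratio i j
  exact ratioQuadratic_eq_zero_iff (M := M) hα₁ hβ₁ hdet θ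

/-- Theorem 4.1, precise form: under genericity, `θ` solves the
paper's quadratic equation iff `θ = α₂/α₁` or `θ = β₂/β₁`; here
`C a b = α₁^a·α₂^b·κL + β₁^a·β₂^b·κE`. -/
theorem stmt6 (α₁ α₂ β₁ β₂ κL κE : ℝ)
    (hα₁ : α₁ ≠ 0) (hα₂ : α₂ ≠ 0) (hβ₁ : β₁ ≠ 0) (hβ₂ : β₂ ≠ 0)
    (hκL : κL ≠ 0) (hκE : κE ≠ 0) (hratio : α₂ * β₁ ≠ α₁ * β₂)
    (i j : ℕ) (hi : 1 ≤ i) (hj : 1 ≤ j)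
    (C : ℕ → ℕ → ℝ)
    (hC : ∀ a b : ℕ, C a b = α₁ ^ a * α₂ ^ b * κL + β₁ ^ a * β₂ ^ b * κE) :
    ∀ θ : ℝ,
      ((C (i+2) (j+1) ^ 2 - C (i+1) (j+2) * C (i+3) j) * θ ^ 2
        + (C i (j+3) * C (i+3) j - C (i+1) (j+2) * C (i+2) (j+1)) * θ
        + (C (i+1) (j+2) ^ 2 - C i (j+3) * C (i+2) (j+1)) = 0)
      ↔ (θ = α₂ / α₁ ∨ θ = β₂ / β₁) :=
  stmt6_general hα₁ hα₂ hβ₁ hβ₂ hκL hκE hratio i j hC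
end

section
/- Let α₁, α₂, β₁, γ₂ be positive reals, β₂, γ₁ nonnegative reals with β₂·γ₁ = 0, κ_L, κ_X, κ_Y positive reals, and i, j ≥ 1 natural numbers; assume the genericity conditions: if β₂ ≠ 0 then α₂β₁ ≠ α₁β₂, and if γ₁ ≠ 0 then α₁γ₂ ≠ α₂γ₁. Define s := C(i+1,j+1)² − C(i,j+2)·C(i+2,j), R_X := (α₁³κ_L + β₁³κ_X + γ₁³κ_Y) − α₁³κ_L − β₁³κ_X, and R_Y := (α₂³κ_L + β₂³κ_X + γ₂³κ_Y) − α₂³κ_L − γ₂³κ_Y. Then exactly one of the following three cases holds, and the observable signatures identify the case: (i) β₂ = 0 and γ₁ = 0 (no directed edge), and then s = 0; (ii) γ₁ = 0 and β₂ ≠ 0 (X is a cause of Y), and then s ≠ 0, R_X = 0 and R_Y ≠ 0; (iii) β₂ = 0 and γ₁ ≠ 0 (Y is a cause of X), and then s ≠ 0, R_Y = 0 and R_X ≠ 0. Hence the causal relationship between the two observed variables is identified by the higher-order cumulants. -/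
/-!
A component entering only one of the two variables does not contribute to the mixed cumulants
`C(a,b)` with `a, b ≥ 1`, so `s` only sees the components shared by both variables. With one shared
component the mixed cumulants are geometric in `a` and `b`, and `s = 0`; with two, Lagrange's
identity turns `s` into minus the product of their contributions to `C(i,j)` times the squared
determinant of their coefficients, which genericity makes nonzero. Without an edge only `L` is
shared; an edge adds the noise of the cause, and the residuals tell which noise that is.
-/

theorem pow_mul_pow_eq_zero_of_mul_eq_zero {M : Type*} [CommMonoidWithZero M] {x y : M} {a b : ℕ}
    (hxy : x * y = 0) (ha : a ≠ 0) (hb : b ≠ 0) :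
    x ^ a * y ^ b = 0 :=
  zero_dvd_iff.mp (hxy ▸ mul_dvd_mul (dvd_pow_self x ha) (dvd_pow_self y hb))

section MixtureCumulant

variable {ι R : Type*} [Fintype ι] [CommSemiring R] {u v κ : ι → R} {a b : ℕ} {k l : ι}

/-- The joint cumulant of order `(a, b)` of `X = ∑ k, u k • S k` and `Y = ∑ k, v k • S k` for
independent sources `S k`, as an algebraic expression in the coefficients. Here `κ k` is the
cumulant of `S k` of order `a + b`; the order is not recorded in `κ` because the cumulants
combined in `cumulantMinor` all have the same one. -/
def mixtureCumulant (u v κ : ι → R) (a b : ℕ) : R :=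
  ∑ k, u k ^ a * v k ^ b * κ k

theorem mixtureCumulant_eq_single (hshared : ∀ m, m ≠ k → u m * v m = 0)
    (ha : a ≠ 0) (hb : b ≠ 0) :
    mixtureCumulant u v κ a b = u k ^ a * v k ^ b * κ k :=
  Fintype.sum_eq_single k fun m hm => by
    rw [pow_mul_pow_eq_zero_of_mul_eq_zero (hshared m hm) ha hb, zero_mul]

theorem mixtureCumulant_eq_add (hkl : k ≠ l) (hshared : ∀ m, m ≠ k ∧ m ≠ l → u m * v m = 0)
    (ha : a ≠ 0) (hb : b ≠ 0) :
    mixtureCumulant u v κ a b = u k ^ a * v k ^ b * κ k + u l ^ a * v l ^ b * κ l :=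
  Fintype.sum_eq_add k l hkl fun m hm => by
    rw [pow_mul_pow_eq_zero_of_mul_eq_zero (hshared m hm) ha hb, zero_mul]

end MixtureCumulant

section CumulantMinor

variable {ι R : Type*} [Fintype ι] [CommRing R] {u v κ : ι → R} {i j : ℕ} {k l : ι}

/-- The quantity `s` of the paper: the negated `2 × 2` Hankel minor of the joint cumulants of total
order `i + j + 2`. It tests whether more than one source is shared by the two variables. -/
def cumulantMinor (u v κ : ι → R) (i j : ℕ) : R :=
  mixtureCumulant u v κ (i + 1) (j + 1) ^ 2 -
    mixtureCumulant u v κ i (j + 2) * mixtureCumulant u v κ (i + 2) j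

theorem cumulantMinor_eq_zero (hshared : ∀ m, m ≠ k → u m * v m = 0) (hi : i ≠ 0) (hj : j ≠ 0) :
    cumulantMinor u v κ i j = 0 := by
  rw [cumulantMinor,
    mixtureCumulant_eq_single hshared (Nat.add_one_ne_zero i) (Nat.add_one_ne_zero j),
    mixtureCumulant_eq_single hshared hi (Nat.add_one_ne_zero (j + 1)),
    mixtureCumulant_eq_single hshared (Nat.add_one_ne_zero (i + 1)) hj]
  ring

theorem cumulantMinor_eq_neg_mul_sq (hkl : k ≠ l)
    (hshared : ∀ m, m ≠ k ∧ m ≠ l → u m * v m = 0) (hi : i ≠ 0) (hj : j ≠ 0) :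
    cumulantMinor u v κ i j =
      -((u k ^ i * v k ^ j * κ k) * (u l ^ i * v l ^ j * κ l) * (u k * v l - u l * v k) ^ 2) := by
  rw [cumulantMinor,
    mixtureCumulant_eq_add hkl hshared (Nat.add_one_ne_zero i) (Nat.add_one_ne_zero j),
    mixtureCumulant_eq_add hkl hshared hi (Nat.add_one_ne_zero (j + 1)),
    mixtureCumulant_eq_add hkl hshared (Nat.add_one_ne_zero (i + 1)) hj]
  ring

theorem cumulantMinor_ne_zero [NoZeroDivisors R]
    (hshared : ∀ m, m ≠ k ∧ m ≠ l → u m * v m = 0) (hi : i ≠ 0) (hj : j ≠ 0)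
    (huk : u k ≠ 0) (hvk : v k ≠ 0) (hκk : κ k ≠ 0) (hul : u l ≠ 0) (hvl : v l ≠ 0) (hκl : κ l ≠ 0)
    (hdet : u k * v l ≠ u l * v k) :
    cumulantMinor u v κ i j ≠ 0 := by
  have hkl : k ≠ l := fun h => hdet (by rw [h])
  have hdet_sub : u k * v l - u l * v k ≠ 0 := sub_ne_zero.mpr hdet
  rw [cumulantMinor_eq_neg_mul_sq hkl hshared hi hj]
  simp [hi, hj, huk, hvk, hκk, hul, hvl, hκl, hdet_sub]

end CumulantMinor

theorem stmt16_general {R : Type*} [CommRing R] [NoZeroDivisors R]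
    (α₁ α₂ β₁ β₂ γ₁ γ₂ κL κX κY : R) (i j : ℕ)
    (hα₁ : α₁ ≠ 0) (hα₂ : α₂ ≠ 0) (hβ₁ : β₁ ≠ 0) (hγ₂ : γ₂ ≠ 0) (hacyc : β₂ * γ₁ = 0)
    (hκL : κL ≠ 0) (hκX : κX ≠ 0) (hκY : κY ≠ 0) (hi : i ≠ 0) (hj : j ≠ 0)
    (hgen₁ : β₂ ≠ 0 → α₂ * β₁ ≠ α₁ * β₂)
    (hgen₂ : γ₁ ≠ 0 → α₁ * γ₂ ≠ α₂ * γ₁)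
    (C : ℕ → ℕ → R)
    (hC : ∀ a b : ℕ, C a b =
      α₁ ^ a * α₂ ^ b * κL + β₁ ^ a * β₂ ^ b * κX + γ₁ ^ a * γ₂ ^ b * κY)
    (s RX RY : R)
    (hs : s = C (i + 1) (j + 1) ^ 2 - C i (j + 2) * C (i + 2) j)
    (hRX : RX = (α₁ ^ 3 * κL + β₁ ^ 3 * κX + γ₁ ^ 3 * κY) - α₁ ^ 3 * κL - β₁ ^ 3 * κX)
    (hRY : RY = (α₂ ^ 3 * κL + β₂ ^ 3 * κX + γ₂ ^ 3 * κY) - α₂ ^ 3 * κL - γ₂ ^ 3 * κY) :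
    (β₂ = 0 ∧ γ₁ = 0 ∧ s = 0)
    ∨ (γ₁ = 0 ∧ β₂ ≠ 0 ∧ s ≠ 0 ∧ RX = 0 ∧ RY ≠ 0)
    ∨ (β₂ = 0 ∧ γ₁ ≠ 0 ∧ s ≠ 0 ∧ RY = 0 ∧ RX ≠ 0) := by
  have hs_minor : s = cumulantMinor ![α₁, β₁, γ₁] ![α₂, β₂, γ₂] ![κL, κX, κY] i j := by
    simp [hs, hC, cumulantMinor, mixtureCumulant, Fin.sum_univ_three]
  have hRX_eq : RX = γ₁ ^ 3 * κY := by rw [hRX]; ring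
  have hRY_eq : RY = β₂ ^ 3 * κX := by rw [hRY]; ring
  rw [hs_minor, hRX_eq, hRY_eq]
  by_cases hβ₂ : β₂ = 0
  · by_cases hγ₁ : γ₁ = 0
    · refine .inl ⟨hβ₂, hγ₁, cumulantMinor_eq_zero (k := 0) ?_ hi hj⟩
      simp [Fin.forall_fin_succ, hβ₂, hγ₁]
    · refine .inr (.inr ⟨hβ₂, hγ₁, ?_, by simp [hβ₂], by simp [hγ₁, hκY]⟩)
      have hdet : α₁ * γ₂ ≠ γ₁ * α₂ := mul_comm α₂ γ₁ ▸ hgen₂ hγ₁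
      refine cumulantMinor_ne_zero (k := 0) (l := 2) ?_ hi hj hα₁ hα₂ hκL hγ₁ hγ₂ hκY hdet
      simp [Fin.forall_fin_succ, hβ₂]
  · have hγ₁ : γ₁ = 0 := (mul_eq_zero.mp hacyc).resolve_left hβ₂
    refine .inr (.inl ⟨hγ₁, hβ₂, ?_, by simp [hγ₁], by simp [hβ₂, hκX]⟩)
    have hdet : α₁ * β₂ ≠ β₁ * α₂ := mul_comm α₂ β₁ ▸ (hgen₁ hβ₂).symm
    refine cumulantMinor_ne_zero (k := 0) (l := 1) ?_ hi hj hα₁ hα₂ hκL hβ₁ hβ₂ hκX hdet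
    simp [Fin.forall_fin_succ, hγ₁]

/-- Theorem 4.4: the causal relationship between the two observed
variables is identified by the higher-order cumulants: exactly one of the three
cases (no edge, X → Y, Y → X) holds, with the corresponding observable
signatures in `s`, `R_X`, `R_Y`. Here
`C a b = α₁^a·α₂^b·κL + β₁^a·β₂^b·κX + γ₁^a·γ₂^b·κY`,
`s = C(i+1,j+1)² − C(i,j+2)·C(i+2,j)`,
`R_X = (α₁³κL + β₁³κX + γ₁³κY) − α₁³κL − β₁³κX`, and
`R_Y = (α₂³κL + β₂³κX + γ₂³κY) − α₂³κL − γ₂³κY`. -/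
theorem stmt16 (α₁ α₂ β₁ β₂ γ₁ γ₂ κL κX κY : ℝ) (i j : ℕ)
    (hα₁ : 0 < α₁) (hα₂ : 0 < α₂) (hβ₁ : 0 < β₁) (hγ₂ : 0 < γ₂)
    (hβ₂ : 0 ≤ β₂) (hγ₁ : 0 ≤ γ₁) (hacyc : β₂ * γ₁ = 0)
    (hκL : 0 < κL) (hκX : 0 < κX) (hκY : 0 < κY)
    (hi : 1 ≤ i) (hj : 1 ≤ j)
    (hgen₁ : β₂ ≠ 0 → α₂ * β₁ ≠ α₁ * β₂)
    (hgen₂ : γ₁ ≠ 0 → α₁ * γ₂ ≠ α₂ * γ₁)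
    (C : ℕ → ℕ → ℝ)
    (hC : ∀ a b : ℕ, C a b =
      α₁ ^ a * α₂ ^ b * κL + β₁ ^ a * β₂ ^ b * κX + γ₁ ^ a * γ₂ ^ b * κY)
    (s RX RY : ℝ)
    (hs : s = C (i+1) (j+1) ^ 2 - C i (j+2) * C (i+2) j)
    (hRX : RX = (α₁ ^ 3 * κL + β₁ ^ 3 * κX + γ₁ ^ 3 * κY)
      - α₁ ^ 3 * κL - β₁ ^ 3 * κX)
    (hRY : RY = (α₂ ^ 3 * κL + β₂ ^ 3 * κX + γ₂ ^ 3 * κY)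
      - α₂ ^ 3 * κL - γ₂ ^ 3 * κY) :
    (β₂ = 0 ∧ γ₁ = 0 ∧ s = 0)
    ∨ (γ₁ = 0 ∧ β₂ ≠ 0 ∧ s ≠ 0 ∧ RX = 0 ∧ RY ≠ 0)
    ∨ (β₂ = 0 ∧ γ₁ ≠ 0 ∧ s ≠ 0 ∧ RY = 0 ∧ RX ≠ 0) := by
  exact stmt16_general α₁ α₂ β₁ β₂ γ₁ γ₂ κL κX κY i j hα₁.ne' hα₂.ne' hβ₁.ne' hγ₂.ne' hacyc
    hκL.ne' hκX.ne' hκY.ne' (by lia) (by lia) hgen₁ hgen₂ C hC s RX RY hs hRX hRY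
end
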